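/- For all nonnegative integers i, j, k with i + j + k ≥ 1 there exist constants C(i,j,k) > 0 and ε(i,j,k) ∈ (0,1) such that: for all λ_A, λ_B > 1 and all θ ∈ (0, π/2) with (π/2 − θ)⁻¹ ≤ ε(i,j,k)·λ_B², the function ψ(λ_A, λ_B, θ) = −(1/2)(π/2 − arctan(a′·cot θ − b′·tan θ)) satisfies |∂^{i+j+k} ψ / (∂θ^i ∂λ_A^j ∂λ_B^k)| ≤ C(i,j,k)·(π/2 − θ)^{−i−1}·λ_A^{−j}·λ_B^{−2−k}. -/

import Mathlib

open Real

/-- a′ = (λ_A²λ_B² − λ_A⁻²λ_B⁻²)/(2(λ_A² − λ_A⁻²)). -/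
noncomputable def aCoef' (lA lB : ℝ) : ℝ :=
  (lA ^ 2 * lB ^ 2 - lA⁻¹ ^ 2 * lB⁻¹ ^ 2) / (2 * (lA ^ 2 - lA⁻¹ ^ 2))

/-- b′ = (λ_A²λ_B⁻² − λ_A⁻²λ_B²)/(2(λ_A² − λ_A⁻²)). -/
noncomputable def bCoef' (lA lB : ℝ) : ℝ :=
  (lA ^ 2 * lB⁻¹ ^ 2 - lA⁻¹ ^ 2 * lB ^ 2) / (2 * (lA ^ 2 - lA⁻¹ ^ 2))

/-- ψ(λ_A, λ_B, θ) = −(1/2)(π/2 − arctan(a′·cot θ − b′·tan θ)) on θ ∈ (0, π/2). -/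
noncomputable def psiS (lA lB θ : ℝ) : ℝ :=
  -(1 / 2) * (π / 2 - Real.arctan (aCoef' lA lB * Real.cot θ - bCoef' lA lB * Real.tan θ))

/-!
In the variables `(λ_A, λ_B, δ)` with `δ = π / 2 - θ`, the claim says that `ψ` is a symbol of weight
`(λ_B² δ)⁻¹`: each derivative in a variable costs one power of that variable. The class of
such functions is closed under sums, products, reciprocals of elliptic elements (those comparable to
their weight), and composition with smooth functions with bounded derivatives, so it suffices to
write `ψ` in terms of simpler symbols. Since `arctan t⁻¹ = π / 2 - arctan t`, we have
`ψ = -(1 / 2) arctan (tanNum / tanDen)` with a numerator of size `δ`. The condition that `λ_B² δ` is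
large makes the negative term of `tanDen` negligible, so that `tanDen` is elliptic of weight
`λ_B² (δ² + λ_A⁻⁴) ≥ λ_B² δ²`.
-/

open Asymptotics Filter Function

lemma abs_arctan_le_abs (y : ℝ) : |arctan y| ≤ |y| := by
  wlog hy : 0 ≤ y generalizing y
  · simpa only [arctan_neg, abs_neg] using this (-y) (by linarith)
  have harctan := arctan_nonneg.2 hy
  rw [abs_of_nonneg harctan, abs_of_nonneg hy]
  simpa only [tan_arctan] using le_tan harctan (arctan_lt_pi_div_two y)

lemma norm_iteratedDeriv_comp_const_sub {𝕜 E : Type*} [NontriviallyNormedField 𝕜]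
    [NormedAddCommGroup E] [NormedSpace 𝕜 E] (n : ℕ) (f : 𝕜 → E) (s x : 𝕜) :
    ‖iteratedDeriv n (fun y => f (s - y)) x‖ = ‖iteratedDeriv n f (s - x)‖ := by
  simp [iteratedDeriv_comp_const_sub, norm_smul]

section Symbols

variable {ι : Type*} [DecidableEq ι] {Ω : Set (ι → ℝ)} {n : ℕ} {u v w f g : (ι → ℝ) → ℝ}

/-- `IsSymbol Ω n w f`: on `Ω`, every iterated partial derivative of `f` of order at most `n`, taken
in any order of the variables, exists and is bounded by a constant times the weight `w` divided by
the product of the coordinates that were differentiated in. This is the symbol class in which the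
scale of the variable `x m` is `x m` itself. -/
def IsSymbol (Ω : Set (ι → ℝ)) : ℕ → ((ι → ℝ) → ℝ) → ((ι → ℝ) → ℝ) → Prop
  | 0, w, f => f =O[𝓟 Ω] w
  | n + 1, w, f => f =O[𝓟 Ω] w ∧ ∀ m, ∃ f', IsSymbol Ω n (fun x => w x / x m) f' ∧
      ∀ x ∈ Ω, HasDerivAt (fun t => f (update x m t)) (f' x) (x m)

lemma IsSymbol.isBigO (hf : IsSymbol Ω n w f) : f =O[𝓟 Ω] w := by
  cases n with
  | zero => exact hf
  | succ n => exact hf.1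

lemma IsSymbol.of_succ (hf : IsSymbol Ω (n + 1) w f) : IsSymbol Ω n w f := by
  induction n generalizing w f with
  | zero => exact hf.isBigO
  | succ n ih =>
    refine ⟨hf.isBigO, fun m => ?_⟩
    obtain ⟨f', hf', hderiv⟩ := hf.2 m
    exact ⟨f', ih hf', hderiv⟩

lemma IsSymbol.mono (hf : IsSymbol Ω n w f) (hwv : w =O[𝓟 Ω] v) : IsSymbol Ω n v f := by
  induction n generalizing w v f with
  | zero => exact IsBigO.trans hf hwv
  | succ n ih =>
    refine ⟨hf.1.trans hwv, fun m => ?_⟩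
    obtain ⟨f', hf', hderiv⟩ := hf.2 m
    refine ⟨f', ih hf' ?_, hderiv⟩
    simpa only [div_eq_mul_inv] using hwv.mul (isBigO_refl (fun x => (x m)⁻¹) (𝓟 Ω))

lemma IsSymbol.mono_of_le (hf : IsSymbol Ω n w f) (C : ℝ) (hw : ∀ x ∈ Ω, 0 ≤ w x)
    (hwv : ∀ x ∈ Ω, w x ≤ C * v x) : IsSymbol Ω n v f := by
  refine hf.mono (isBigO_principal.2 ⟨|C|, fun x hx => ?_⟩)
  calc ‖w x‖ = w x := abs_of_nonneg (hw x hx)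
    _ ≤ C * v x := hwv x hx
    _ ≤ |C * v x| := le_abs_self _
    _ = |C| * ‖v x‖ := abs_mul _ _

lemma IsSymbol.congr (hΩ : IsOpen Ω) (hf : IsSymbol Ω n w f) (hfg : Set.EqOn f g Ω) :
    IsSymbol Ω n w g := by
  have hg : g =O[𝓟 Ω] w :=
    hf.isBigO.congr' (eventually_principal.2 hfg) EventuallyEq.rfl
  cases n with
  | zero => exact hg
  | succ n =>
    refine ⟨hg, fun m => ?_⟩
    obtain ⟨f', hf', hderiv⟩ := hf.2 m
    refine ⟨f', hf', fun x hx => (hderiv x hx).congr_of_eventuallyEq ?_⟩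
    have hupdate : Tendsto (update x m) (nhds (x m)) (nhds x) := by
      have hcont : Continuous (update x m) := continuous_const.update m continuous_id
      simpa only [update_eq_self] using hcont.tendsto (x m)
    exact (hupdate.eventually (hΩ.mem_nhds hx)).mono fun t ht => (hfg ht).symm

lemma isSymbol_zero : IsSymbol Ω n w fun _ => 0 := by
  induction n generalizing w with
  | zero => exact isBigO_zero _ _
  | succ n ih => exact ⟨isBigO_zero _ _, fun m => ⟨fun _ => 0, ih, fun _ _ => hasDerivAt_const _ _⟩⟩

lemma isSymbol_const (c : ℝ) : IsSymbol Ω n (fun _ => 1) fun _ => c := by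
  have hc : (fun _ => c) =O[𝓟 Ω] fun _ => (1 : ℝ) := isBigO_const_const c one_ne_zero _
  cases n with
  | zero => exact hc
  | succ n => exact ⟨hc, fun m => ⟨fun _ => 0, isSymbol_zero, fun _ _ => hasDerivAt_const _ _⟩⟩

lemma isSymbol_coord (m : ι) (hm : ∀ x ∈ Ω, x m ≠ 0) :
    IsSymbol Ω n (fun x => x m) fun x => x m := by
  cases n with
  | zero => exact isBigO_refl _ _
  | succ n =>
    refine ⟨isBigO_refl _ _, fun l => ?_⟩
    by_cases hl : l = m
    · subst hl
      refine ⟨fun _ => 1, (isSymbol_const 1).mono_of_le 1 (fun _ _ => zero_le_one) fun x hx => ?_,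
        fun x _ => by simpa only [update_self] using hasDerivAt_id' (x l)⟩
      rw [div_self (hm x hx), one_mul]
    · exact ⟨fun _ => 0, isSymbol_zero, fun x _ => by
        simpa only [update_of_ne (Ne.symm hl)] using hasDerivAt_const (x l) (x m)⟩

lemma IsSymbol.add (hf : IsSymbol Ω n w f) (hg : IsSymbol Ω n w g) :
    IsSymbol Ω n w fun x => f x + g x := by
  induction n generalizing w f g with
  | zero => exact IsBigO.add hf hg
  | succ n ih =>
    refine ⟨hf.1.add hg.1, fun m => ?_⟩
    obtain ⟨f', hf', hfderiv⟩ := hf.2 m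
    obtain ⟨g', hg', hgderiv⟩ := hg.2 m
    exact ⟨fun x => f' x + g' x, ih hf' hg', fun x hx => (hfderiv x hx).add (hgderiv x hx)⟩

lemma IsSymbol.mul (hf : IsSymbol Ω n w f) (hg : IsSymbol Ω n v g) :
    IsSymbol Ω n (fun x => w x * v x) fun x => f x * g x := by
  induction n generalizing w v f g with
  | zero => exact IsBigO.mul hf hg
  | succ n ih =>
    refine ⟨hf.1.mul hg.1, fun m => ?_⟩
    obtain ⟨f', hf', hfderiv⟩ := hf.2 m
    obtain ⟨g', hg', hgderiv⟩ := hg.2 m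
    refine ⟨fun x => f' x * g x + f x * g' x, .add ?_ ?_, fun x hx => ?_⟩
    · simpa only [div_mul_eq_mul_div] using ih hf' hg.of_succ
    · simpa only [mul_div_assoc] using ih hf.of_succ hg'
    · simpa only [update_eq_self] using (hfderiv x hx).fun_mul (hgderiv x hx)

lemma IsSymbol.const_mul (c : ℝ) (hf : IsSymbol Ω n w f) : IsSymbol Ω n w fun x => c * f x := by
  simpa only [one_mul] using (isSymbol_const c).mul hf

lemma IsSymbol.sub (hf : IsSymbol Ω n w f) (hg : IsSymbol Ω n w g) :
    IsSymbol Ω n w fun x => f x - g x := by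
  simpa only [neg_one_mul, ← sub_eq_add_neg] using hf.add (hg.const_mul (-1))

lemma IsSymbol.pow (hf : IsSymbol Ω n w f) (k : ℕ) :
    IsSymbol Ω n (fun x => w x ^ k) fun x => f x ^ k := by
  induction k with
  | zero => simpa only [pow_zero] using isSymbol_const 1
  | succ k ih => simpa only [pow_succ] using ih.mul hf

lemma IsSymbol.comp_succ {φ φ' : ℝ → ℝ} (hf : IsSymbol Ω (n + 1) w f)
    (hφ : ∀ x ∈ Ω, HasDerivAt φ (φ' (f x)) (f x)) (hφ' : IsSymbol Ω n v fun x => φ' (f x))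
    (hbound : (fun x => φ (f x)) =O[𝓟 Ω] u) (hvw : (fun x => v x * w x) =O[𝓟 Ω] u) :
    IsSymbol Ω (n + 1) u fun x => φ (f x) := by
  refine ⟨hbound, fun m => ?_⟩
  obtain ⟨f', hf', hderiv⟩ := hf.2 m
  refine ⟨fun x => φ' (f x) * f' x, (hφ'.mul hf').mono ?_, fun x hx => ?_⟩
  · simpa only [div_eq_mul_inv, mul_assoc] using
      hvw.mul (isBigO_refl (fun x => (x m)⁻¹) (𝓟 Ω))
  · exact HasDerivAt.comp (x m) (by simpa only [update_eq_self] using hφ x hx) (hderiv x hx)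

lemma IsSymbol.inv (hf : IsSymbol Ω n w f) (hw : ∀ x ∈ Ω, w x ≠ 0) (hwf : w =O[𝓟 Ω] f) :
    IsSymbol Ω n (fun x => (w x)⁻¹) fun x => (f x)⁻¹ := by
  have hbound : (fun x => (f x)⁻¹) =O[𝓟 Ω] fun x => (w x)⁻¹ :=
    hwf.inv_rev (eventually_principal.2 fun x hx hwx => absurd hwx (hw x hx))
  obtain ⟨C, hC⟩ := isBigO_principal.1 hwf
  have hf0 : ∀ x ∈ Ω, f x ≠ 0 := fun x hx hfx =>
    hw x hx (norm_le_zero_iff.1 (by simpa only [hfx, norm_zero, mul_zero] using hC x hx))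
  induction n with
  | zero => exact hbound
  | succ n ih =>
    have hderiv : IsSymbol Ω n (fun x => (w x)⁻¹ ^ 2) fun x => -(f x ^ 2)⁻¹ := by
      simpa only [neg_one_mul, inv_pow] using ((ih hf.of_succ).pow 2).const_mul (-1)
    refine hf.comp_succ (φ' := fun y => -(y ^ 2)⁻¹) (fun x hx => hasDerivAt_inv (hf0 x hx)) hderiv
      hbound ((isBigO_refl _ _).congr' (eventually_principal.2 fun x hx => ?_) EventuallyEq.rfl)
    have := hw x hx
    field_simp

lemma IsSymbol.div (hf : IsSymbol Ω n w f) (hg : IsSymbol Ω n v g) (hv : ∀ x ∈ Ω, v x ≠ 0)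
    (hvg : v =O[𝓟 Ω] g) : IsSymbol Ω n (fun x => w x / v x) fun x => f x / g x := by
  simpa only [div_eq_mul_inv] using hf.mul (hg.inv hv hvg)

lemma IsSymbol.arctan (hf : IsSymbol Ω n w f) (hw : w =O[𝓟 Ω] fun _ => (1 : ℝ)) :
    IsSymbol Ω n w fun x => Real.arctan (f x) := by
  have hbound : (fun x => Real.arctan (f x)) =O[𝓟 Ω] w :=
    (isBigO_of_le _ fun x => abs_arctan_le_abs (f x)).trans hf.isBigO
  cases n with
  | zero => exact hbound
  | succ n =>
    have hsq : IsSymbol Ω n (fun _ => 1) fun x => 1 + f x ^ 2 :=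
      (isSymbol_const 1).add (by simpa only [one_pow] using (hf.of_succ.mono hw).pow 2)
    have hone_le : (fun _ => (1 : ℝ)) =O[𝓟 Ω] fun x => 1 + f x ^ 2 :=
      isBigO_of_le _ fun x => by
        rw [norm_one, Real.norm_of_nonneg (by positivity)]
        exact le_add_of_nonneg_right (sq_nonneg _)
    refine hf.comp_succ (φ' := fun y => (1 + y ^ 2)⁻¹) (fun x _ => Real.hasDerivAt_arctan' (f x))
      (hsq.inv (fun _ _ => one_ne_zero) hone_le) hbound ?_
    simpa only [inv_one, one_mul] using isBigO_refl w _

lemma IsSymbol.sin_cos_weight_one (hf : IsSymbol Ω n w f) (hw : w =O[𝓟 Ω] fun _ => (1 : ℝ)) :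
    IsSymbol Ω n (fun _ => 1) (fun x => Real.sin (f x)) ∧
      IsSymbol Ω n (fun _ => 1) (fun x => Real.cos (f x)) := by
  have hsin : (fun x => Real.sin (f x)) =O[𝓟 Ω] fun _ => (1 : ℝ) :=
    isBigO_of_le _ fun x => by simpa using Real.abs_sin_le_one (f x)
  have hcos : (fun x => Real.cos (f x)) =O[𝓟 Ω] fun _ => (1 : ℝ) :=
    isBigO_of_le _ fun x => by simpa using Real.abs_cos_le_one (f x)
  induction n with
  | zero => exact ⟨hsin, hcos⟩
  | succ n ih =>
    obtain ⟨ihsin, ihcos⟩ := ih hf.of_succ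
    have ihsin_neg : IsSymbol Ω n (fun _ => 1) fun x => -Real.sin (f x) := by
      simpa only [neg_one_mul] using ihsin.const_mul (-1)
    have hw' : (fun x => 1 * w x) =O[𝓟 Ω] fun _ => (1 : ℝ) := by simpa only [one_mul] using hw
    exact ⟨hf.comp_succ (fun x _ => Real.hasDerivAt_sin (f x)) ihcos hsin hw',
      hf.comp_succ (φ' := fun y => -Real.sin y) (fun x _ => Real.hasDerivAt_cos (f x)) ihsin_neg
        hcos hw'⟩

lemma IsSymbol.sin (hf : IsSymbol Ω n w f) (hw : w =O[𝓟 Ω] fun _ => (1 : ℝ)) :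
    IsSymbol Ω n w fun x => Real.sin (f x) := by
  have hbound : (fun x => Real.sin (f x)) =O[𝓟 Ω] w :=
    (isBigO_of_le _ fun x => Real.abs_sin_le_abs).trans hf.isBigO
  cases n with
  | zero => exact hbound
  | succ n =>
    refine hf.comp_succ (fun x _ => Real.hasDerivAt_sin (f x)) (hf.of_succ.sin_cos_weight_one hw).2
      hbound ?_
    simpa only [one_mul] using isBigO_refl w _

lemma IsSymbol.deriv_update (hΩ : IsOpen Ω) (hf : IsSymbol Ω (n + 1) w f) (m : ι) :
    IsSymbol Ω n (fun x => w x / x m) fun x => deriv (fun t => f (update x m t)) (x m) := by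
  obtain ⟨f', hf', hderiv⟩ := hf.2 m
  exact hf'.congr hΩ fun x hx => (hderiv x hx).deriv.symm

lemma IsSymbol.iteratedDeriv_update (hΩ : IsOpen Ω) (m : ι) {k : ℕ}
    (hf : IsSymbol Ω (n + k) w f) :
    IsSymbol Ω n (fun x => w x / x m ^ k)
      fun x => iteratedDeriv k (fun t => f (update x m t)) (x m) := by
  induction k generalizing n with
  | zero => simpa only [pow_zero, div_one, iteratedDeriv_zero, update_eq_self, add_zero] using hf
  | succ k ih =>
    have hk := (ih (n := n + 1) (by rwa [add_assoc, add_comm 1])).deriv_update hΩ m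
    simpa only [update_idem, update_self, div_div, ← pow_succ, ← iteratedDeriv_succ] using hk

lemma IsSymbol.exists_abs_iteratedDeriv_le {Ω : Set (Fin 3 → ℝ)} {w : (Fin 3 → ℝ) → ℝ}
    {F : ℝ → ℝ → ℝ → ℝ} {i j k : ℕ} (hΩ : IsOpen Ω)
    (hF : IsSymbol Ω (i + j + k) w fun x => F (x 0) (x 1) (x 2)) :
    ∃ C > 0, ∀ a b δ, ![a, b, δ] ∈ Ω →
      |iteratedDeriv i (fun δ' => iteratedDeriv j
        (fun a' => iteratedDeriv k (fun b' => F a' b' δ') b) a) δ| ≤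
        C * |w ![a, b, δ] / b ^ k / a ^ j / δ ^ i| := by
  have hderiv : IsSymbol Ω 0 _ _ := IsSymbol.iteratedDeriv_update hΩ 2 (k := i) <|
    IsSymbol.iteratedDeriv_update hΩ 0 (k := j) <|
      IsSymbol.iteratedDeriv_update hΩ 1 (k := k) <| by rwa [zero_add]
  obtain ⟨C, hC, hbound⟩ := hderiv.isBigO.exists_pos
  refine ⟨C, hC, fun a b δ hx => ?_⟩
  simpa [update, abs_div] using isBigOWith_principal.1 hbound _ hx

end Symbols

section Psi

variable {a b δ : ℝ}

/-- The numerator of `tan (-2ψ)` at `θ = π / 2 - δ`, with common factors cancelled so that it is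
regular as `a → ∞`. -/
noncomputable def tanNum (a δ : ℝ) : ℝ :=
  2 * (1 - a⁻¹ ^ 4) * sin δ * cos δ

/-- The denominator of `tan (-2ψ)` at `θ = π / 2 - δ`. -/
noncomputable def tanDen (a b δ : ℝ) : ℝ :=
  b ^ 2 * (sin δ ^ 2 + a⁻¹ ^ 4 * cos δ ^ 2) - (b ^ 2)⁻¹ * (a⁻¹ ^ 4 * sin δ ^ 2 + cos δ ^ 2)

/-- The size of `tanDen`. The summand `a⁻¹ ^ 4` dominates when `θ` is within `a⁻²` of `π / 2`. -/
noncomputable def tanDenWeight (a b δ : ℝ) : ℝ :=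
  b ^ 2 * (δ ^ 2 + a⁻¹ ^ 4)

/-- The region of triples `(λ_A, λ_B, π / 2 - θ)` on which `ψ` is estimated. -/
def psiRegion : Set (Fin 3 → ℝ) :=
  {x | 1 < x 0 ∧ 0 < x 1 ∧ 0 < x 2 ∧ x 2 < π / 2 ∧ 4 < x 1 ^ 2 * x 2}

lemma isOpen_psiRegion : IsOpen psiRegion := by
  simp only [psiRegion, Set.ofPred_and]
  refine .inter ?_ (.inter ?_ (.inter ?_ (.inter ?_ ?_))) <;> apply isOpen_lt <;> fun_prop

lemma inv_pow_four_lt_one (ha : 1 < a) : a⁻¹ ^ 4 < 1 :=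
  pow_lt_one₀ (by positivity) (inv_lt_one_of_one_lt₀ ha) (by norm_num)

lemma tanDenWeight_pos (ha : a ≠ 0) (hb : b ≠ 0) : 0 < tanDenWeight a b δ := by
  unfold tanDenWeight
  positivity

lemma inv_sq_le_mul_sq (hδ : 4 < b ^ 2 * δ) : (b ^ 2)⁻¹ ≤ 1 / 16 * (b ^ 2 * δ ^ 2) := by
  have hb : 0 < b ^ 2 := by
    refine (sq_nonneg b).lt_of_ne fun h => ?_
    rw [← h, zero_mul] at hδ
    linarith
  rw [inv_le_iff_one_le_mul₀ hb]
  nlinarith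

lemma mul_sq_add_le_sin_sq_add_mul_cos_sq {s : ℝ} (hs0 : 0 ≤ s) (hs1 : s ≤ 1) (hδ0 : 0 ≤ δ)
    (hδ : δ ≤ π / 2) :
    18 / 100 * (δ ^ 2 + s) ≤ sin δ ^ 2 + s * cos δ ^ 2 := by
  have hsin : 6 / 10 * δ ≤ sin δ := by
    have hpi : (6 / 10 : ℝ) ≤ 2 / π := by
      rw [le_div_iff₀ pi_pos]
      linarith [pi_lt_d2]
    exact (mul_le_mul_of_nonneg_right hpi hδ0).trans (mul_le_sin hδ0 hδ)
  have hsin_sq : 36 / 100 * δ ^ 2 ≤ sin δ ^ 2 := by nlinarith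
  have hs_sin_sq : 0 ≤ (1 - s) * sin δ ^ 2 := mul_nonneg (sub_nonneg.2 hs1) (sq_nonneg _)
  have hs_cos_sq : 0 ≤ s * cos δ ^ 2 := mul_nonneg hs0 (sq_nonneg _)
  have hs : s = s * sin δ ^ 2 + s * cos δ ^ 2 := by rw [← mul_add, sin_sq_add_cos_sq, mul_one]
  linarith

lemma mul_tanDenWeight_le_tanDen (ha : 1 < a) (hδ0 : 0 ≤ δ) (hδ : δ ≤ π / 2)
    (hbδ : 4 < b ^ 2 * δ) : 1 / 10 * tanDenWeight a b δ ≤ tanDen a b δ := by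
  have hs0 : 0 ≤ a⁻¹ ^ 4 := by positivity
  have hs1 := (inv_pow_four_lt_one ha).le
  unfold tanDenWeight tanDen
  set s := a⁻¹ ^ 4
  have hmain := mul_le_mul_of_nonneg_left
    (mul_sq_add_le_sin_sq_add_mul_cos_sq hs0 hs1 hδ0 hδ) (sq_nonneg b)
  have hle_one : s * sin δ ^ 2 + cos δ ^ 2 ≤ 1 := by
    nlinarith [sq_nonneg (sin δ), sin_sq_add_cos_sq δ]
  have herror : (b ^ 2)⁻¹ * (s * sin δ ^ 2 + cos δ ^ 2) ≤ 1 / 16 * (b ^ 2 * δ ^ 2) :=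
    (mul_le_of_le_one_right (by positivity) hle_one).trans (inv_sq_le_mul_sq hbδ)
  have hbs : 0 ≤ b ^ 2 * s := by positivity
  have hbδ_sq : 0 ≤ b ^ 2 * δ ^ 2 := by positivity
  linarith

lemma aCoef'_mul_cot_sub_bCoef'_mul_tan (ha : 1 < a) (hb : b ≠ 0) (hsin : sin δ ≠ 0)
    (hcos : cos δ ≠ 0) :
    aCoef' a b * cot (π / 2 - δ) - bCoef' a b * tan (π / 2 - δ) = tanDen a b δ / tanNum a δ := by
  have ha0 : a ≠ 0 := by positivity
  have hs : 1 - a⁻¹ ^ 4 ≠ 0 := (sub_pos.2 (inv_pow_four_lt_one ha)).ne'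
  have hfactor : a ^ 2 - a⁻¹ ^ 2 = a ^ 2 * (1 - a⁻¹ ^ 4) := by field_simp
  rw [aCoef', bCoef', tanDen, tanNum, cot_eq_cos_div_sin, tan_eq_sin_div_cos, cos_pi_div_two_sub,
    sin_pi_div_two_sub, hfactor]
  generalize 1 - a⁻¹ ^ 4 = S at hs
  field_simp
  ring

lemma psiS_pi_div_two_sub (ha : 1 < a) (hb : b ≠ 0) (hδ0 : 0 < δ) (hδ : δ < π / 2)
    (hden : 0 < tanDen a b δ) :
    psiS a b (π / 2 - δ) = -(1 / 2) * arctan (tanNum a δ / tanDen a b δ) := by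
  have hsin : 0 < sin δ := sin_pos_of_pos_of_lt_pi hδ0 (by linarith)
  have hcos : 0 < cos δ := cos_pos_of_mem_Ioo ⟨by linarith, hδ⟩
  have hs : 0 < 1 - a⁻¹ ^ 4 := sub_pos.2 (inv_pow_four_lt_one ha)
  have hnum : 0 < tanNum a δ := by
    unfold tanNum
    positivity
  rw [psiS, aCoef'_mul_cot_sub_bCoef'_mul_tan ha hb hsin.ne' hcos.ne', ← inv_div (tanNum a δ),
    arctan_inv_of_pos (div_pos hnum hden), sub_sub_cancel]

variable {n : ℕ}

lemma isSymbol_inv_coord_zero_pow_four :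
    IsSymbol psiRegion n (fun x => (x 0)⁻¹ ^ 4) fun x => (x 0)⁻¹ ^ 4 := by
  have h0 : ∀ x ∈ psiRegion, x 0 ≠ 0 := fun x hx => (zero_lt_one.trans hx.1).ne'
  exact ((isSymbol_coord 0 h0).inv h0 (isBigO_refl _ _)).pow 4

lemma isSymbol_inv_coord_zero_pow_four_weight_one :
    IsSymbol psiRegion n (fun _ => 1) fun x => (x 0)⁻¹ ^ 4 :=
  isSymbol_inv_coord_zero_pow_four.mono_of_le 1 (fun _ _ => by positivity) fun x hx => by
    simpa only [one_mul] using (inv_pow_four_lt_one hx.1).le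

lemma isSymbol_coord_two : IsSymbol psiRegion n (fun x => x 2) fun x => x 2 :=
  isSymbol_coord 2 fun _ hx => hx.2.2.1.ne'

lemma isBigO_coord_two : (fun x => x 2) =O[𝓟 psiRegion] fun _ => (1 : ℝ) :=
  isBigO_principal.2 ⟨π / 2, fun x hx => by
    rw [norm_one, mul_one, Real.norm_of_nonneg hx.2.2.1.le]
    exact hx.2.2.2.1.le⟩

lemma isSymbol_tanNum : IsSymbol psiRegion n (fun x => x 2) fun x => tanNum (x 0) (x 2) := by
  have hsin := (isSymbol_coord_two (n := n)).sin isBigO_coord_two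
  have hcos := ((isSymbol_coord_two (n := n)).sin_cos_weight_one isBigO_coord_two).2
  have hfactor := ((isSymbol_const 1).sub
    (isSymbol_inv_coord_zero_pow_four_weight_one (n := n))).const_mul 2
  simpa only [tanNum, one_mul, mul_one] using (hfactor.mul hsin).mul hcos

lemma isSymbol_tanDen : IsSymbol psiRegion n (fun x => tanDenWeight (x 0) (x 1) (x 2))
    fun x => tanDen (x 0) (x 1) (x 2) := by
  obtain ⟨hsin_one, hcos⟩ := (isSymbol_coord_two (n := n)).sin_cos_weight_one isBigO_coord_two
  have hsin := (isSymbol_coord_two (n := n)).sin isBigO_coord_two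
  have hb : ∀ x ∈ psiRegion, x 1 ≠ 0 := fun x hx => hx.2.1.ne'
  have hb_sq : IsSymbol psiRegion n _ _ := (isSymbol_coord 1 hb).pow 2
  have hb_inv := hb_sq.inv (fun x hx => pow_ne_zero 2 (hb x hx)) (isBigO_refl _ _)
  have hmain : IsSymbol psiRegion n (fun x => x 2 ^ 2 + (x 0)⁻¹ ^ 4)
      fun x => Real.sin (x 2) ^ 2 + (x 0)⁻¹ ^ 4 * Real.cos (x 2) ^ 2 := by
    refine ((hsin.pow 2).mono_of_le 1 (fun _ _ => by positivity) fun x _ => ?_).add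
      ((isSymbol_inv_coord_zero_pow_four.mul (hcos.pow 2)).mono_of_le 1 (fun _ _ => by positivity)
        fun x _ => ?_)
    · rw [one_mul]
      exact le_add_of_nonneg_right (by positivity)
    · rw [one_mul, one_pow, mul_one]
      exact le_add_of_nonneg_left (by positivity)
  have herror : IsSymbol psiRegion n (fun _ => 1)
      fun x => (x 0)⁻¹ ^ 4 * Real.sin (x 2) ^ 2 + Real.cos (x 2) ^ 2 := by
    have hs_sin := isSymbol_inv_coord_zero_pow_four_weight_one.mul (hsin_one.pow 2)
    have hcos_sq := hcos.pow 2
    simp only [one_pow, one_mul] at hs_sin hcos_sq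
    exact hs_sin.add hcos_sq
  refine (hb_sq.mul hmain).sub
    ((hb_inv.mul herror).mono_of_le (1 / 16) (fun _ _ => by positivity) fun x hx => ?_)
  have hbs : 0 ≤ x 1 ^ 2 * (x 0)⁻¹ ^ 4 := by positivity
  rw [mul_one]
  linarith [inv_sq_le_mul_sq hx.2.2.2.2]

lemma isSymbol_tanNum_div_tanDen : IsSymbol psiRegion n (fun x => (x 1 ^ 2 * x 2)⁻¹)
    fun x => tanNum (x 0) (x 2) / tanDen (x 0) (x 1) (x 2) := by
  have hpos : ∀ x ∈ psiRegion, 0 < tanDenWeight (x 0) (x 1) (x 2) := fun x hx =>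
    tanDenWeight_pos (zero_lt_one.trans hx.1).ne' hx.2.1.ne'
  have hlower : (fun x => tanDenWeight (x 0) (x 1) (x 2)) =O[𝓟 psiRegion]
      fun x => tanDen (x 0) (x 1) (x 2) := by
    refine isBigO_principal.2 ⟨10, fun x hx => ?_⟩
    have ⟨ha, _, hδ0, hδ, hbδ⟩ := hx
    rw [Real.norm_of_nonneg (hpos x hx).le]
    linarith [mul_tanDenWeight_le_tanDen ha hδ0.le hδ.le hbδ,
      le_norm_self (tanDen (x 0) (x 1) (x 2))]
  refine (isSymbol_tanNum.div isSymbol_tanDen (fun x hx => (hpos x hx).ne') hlower).mono_of_le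
    1 (fun x hx => div_nonneg hx.2.2.1.le (hpos x hx).le) fun x hx => ?_
  have ⟨_, hb, hδ0, _, _⟩ := hx
  rw [one_mul, div_le_iff₀ (hpos x hx), ← div_eq_inv_mul, le_div_iff₀ (by positivity),
    tanDenWeight]
  have hbs : 0 ≤ x 1 ^ 2 * (x 0)⁻¹ ^ 4 := by positivity
  linarith

lemma isSymbol_psiS : IsSymbol psiRegion n (fun x => (x 1 ^ 2 * x 2)⁻¹)
    fun x => psiS (x 0) (x 1) (π / 2 - x 2) := by
  have hweight : (fun x => (x 1 ^ 2 * x 2)⁻¹) =O[𝓟 psiRegion] fun _ => (1 : ℝ) := by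
    refine isBigO_principal.2 ⟨1, fun x hx => ?_⟩
    obtain ⟨-, hb, hδ0, -, hbδ⟩ := hx
    rw [Real.norm_of_nonneg (by positivity), norm_one, mul_one]
    exact inv_le_one_of_one_le₀ (by linarith)
  refine ((isSymbol_tanNum_div_tanDen.arctan hweight).const_mul (-(1 / 2))).congr
    isOpen_psiRegion fun x hx => ?_
  obtain ⟨ha, hb, hδ0, hδ, hbδ⟩ := hx
  have hden : 0 < tanDen (x 0) (x 1) (x 2) :=
    (mul_pos (by norm_num) (tanDenWeight_pos (zero_lt_one.trans ha).ne' hb.ne')).trans_le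
      (mul_tanDenWeight_le_tanDen ha hδ0.le hδ.le hbδ)
  exact (psiS_pi_div_two_sub ha hb.ne' hδ0 hδ hden).symm

end Psi

theorem psi_partial_derivative_bounds (i j k : ℕ) (hijk : 1 ≤ i + j + k) :
    ∃ C : ℝ, 0 < C ∧ ∃ ε : ℝ, 0 < ε ∧ ε < 1 ∧
      ∀ lA lB θ : ℝ, 1 < lA → 1 < lB → 0 < θ → θ < π / 2 →
        (π / 2 - θ)⁻¹ ≤ ε * lB ^ 2 →
        |iteratedDeriv i
            (fun θ' => iteratedDeriv j
              (fun a => iteratedDeriv k (fun b => psiS a b θ') lB) lA) θ| ≤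
          C * (π / 2 - θ) ^ (-(i : ℤ) - 1) * lA ^ (-(j : ℤ)) * lB ^ (-2 - (k : ℤ)) := by
  obtain ⟨C, hC, hbound⟩ := IsSymbol.exists_abs_iteratedDeriv_le (i := i) (j := j) (k := k)
    (F := fun a b δ => psiS a b (π / 2 - δ)) isOpen_psiRegion isSymbol_psiS
  refine ⟨C, hC, 1 / 8, by norm_num, by norm_num, fun lA lB θ hA hB hθ0 hθ hε => ?_⟩
  have hδ : 0 < π / 2 - θ := sub_pos.2 hθ
  have hregion : ![lA, lB, π / 2 - θ] ∈ psiRegion := by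
    rw [inv_le_iff_one_le_mul₀ hδ] at hε
    have hlarge : 4 < lB ^ 2 * (π / 2 - θ) := by linarith
    exact ⟨hA, zero_lt_one.trans hB, hδ, sub_lt_self _ hθ0, hlarge⟩
  have hweight : C * |(lB ^ 2 * (π / 2 - θ))⁻¹ / lB ^ k / lA ^ j / (π / 2 - θ) ^ i| =
      C * (π / 2 - θ) ^ (-(i : ℤ) - 1) * lA ^ (-(j : ℤ)) * lB ^ (-2 - (k : ℤ)) := by
    rw [abs_of_pos (by positivity), zpow_sub₀ hδ.ne', zpow_sub₀ (by positivity)]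
    simp only [zpow_neg, zpow_natCast, zpow_ofNat]
    field_simp
  have hreflect := norm_iteratedDeriv_comp_const_sub i
    (fun δ => iteratedDeriv j (fun a => iteratedDeriv k (fun b => psiS a b (π / 2 - δ)) lB) lA)
    (π / 2) θ
  simp only [sub_sub_cancel, norm_eq_abs] at hreflect
  exact hreflect.trans_le ((hbound _ _ _ hregion).trans_eq hweight)
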